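/- Holevo bound (finite dimensions, finite ensemble): let (π(θ), ρ_θ)_{θ∈Θ} be a finite ensemble of density matrices on ℂ^d and (M_y) a finite POVM with P_θ(y) = tr(ρ_θ M_y). Then the classical mutual information I(θ;Y) = Σ_θ π(θ) D(P_θ‖P̄) with P̄ = Σ_θ π(θ) P_θ satisfies I(θ;Y) ≤ χ := Σ_θ π(θ) D(ρ_θ‖ρ̄), where ρ̄ = Σ_θ π(θ) ρ_θ. -/

import Mathlib

open scoped Matrix BigOperators ComplexOrder

variable {d : ℕ}

/-- Matrix logarithm of a Hermitian matrix via its spectral decomposition. -/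
noncomputable def hermLog {A : Matrix (Fin d) (Fin d) ℂ} (hA : A.IsHermitian) :
    Matrix (Fin d) (Fin d) ℂ :=
  (hA.eigenvectorUnitary : Matrix (Fin d) (Fin d) ℂ) *
    Matrix.diagonal (fun i => (Real.log (hA.eigenvalues i) : ℂ)) *
    star (hA.eigenvectorUnitary : Matrix (Fin d) (Fin d) ℂ)

/-- Quantum relative entropy `D(ρ‖σ) = tr ρ(log ρ − log σ)`. -/
noncomputable def qRelEntropy {ρ σ : Matrix (Fin d) (Fin d) ℂ}
    (hρ : ρ.IsHermitian) (hσ : σ.IsHermitian) : ℝ :=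
  (Matrix.trace (ρ * (hermLog hρ - hermLog hσ))).re

/-!
For each `θ` with `π θ > 0` the kernel of the average state lies in that of `ρ θ`, so the theorem
follows from the monotonicity of the relative entropy `D(ρ‖σ)` under the measurement. The logarithm
being an integral of resolvents, it suffices to compare, for every `s > 0`, the resolvent sum
`∑ p² / (q + s p)` of the outcome distributions with that of the Nussbaum-Szkola distributions,
whose classical relative entropy is `D(ρ‖σ)`. The functional `X ↦ 2 tr (ρ X) - tr ((σ + s ρ) X²)`
separates the two sums: at `X = ∑ x_y M_y` with `x_y = p_y / (q_y + s p_y)` it is at least the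
first, by the Kadison-Schwarz inequality `X² ≤ ∑ x_y² M_y`, and completing squares in the
eigenbases of `ρ` and `σ` bounds it above by the second at every Hermitian `X`.
-/

section LogPotential

open Filter Topology

variable {ι κ : Type*} [Fintype ι] [Fintype κ] {w u v : ι → ℝ}

/-- The function `s ↦ ∑ₖ wₖ log (vₖ + s uₖ)`: it equals `∑ₖ wₖ log vₖ` at `s = 0` and is
`(∑ₖ wₖ) log s + ∑ₖ wₖ log uₖ + o(1)` as `s → ∞` if no `uₖ` vanishes; its derivative is a
resolvent sum. -/
noncomputable def logPotential (w u v : ι → ℝ) (s : ℝ) : ℝ :=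
  ∑ k, w k * Real.log (v k + s * u k)

lemma logPotential_zero : logPotential w u v 0 = ∑ k, w k * Real.log (v k) := by
  simp [logPotential]

lemma hasDerivAt_logPotential {s : ℝ} (h : ∀ k, w k ≠ 0 → v k + s * u k ≠ 0) :
    HasDerivAt (logPotential w u v) (∑ k, w k * (u k / (v k + s * u k))) s := by
  refine HasDerivAt.fun_sum fun k _ => ?_
  by_cases hw : w k = 0
  · simpa [hw] using hasDerivAt_const s (0 : ℝ)
  · have hlin : HasDerivAt (fun s => v k + s * u k) (u k) s := by
      simpa using ((hasDerivAt_id s).mul_const (u k)).const_add (v k)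
    exact (hlin.log (h k hw)).const_mul (w k)

lemma tendsto_log_add_mul_sub_log (v : ℝ) {u : ℝ} (hu : u ≠ 0) :
    Tendsto (fun s => Real.log (v + s * u) - Real.log s) atTop (𝓝 (Real.log u)) := by
  have hquot : Tendsto (fun s => v / s + u) atTop (𝓝 u) := by
    simpa using (tendsto_const_nhds.div_atTop tendsto_id).add_const u
  refine ((Real.continuousAt_log hu).tendsto.comp hquot).congr' ?_
  filter_upwards [eventually_gt_atTop 0, hquot.eventually_ne hu] with s hs hne
  have hfactor : v + s * u = (v / s + u) * s := by field_simp
  rw [hfactor, Real.log_mul hne hs.ne', add_sub_cancel_right, Function.comp_apply]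

lemma tendsto_logPotential_sub_log (h : ∀ k, w k ≠ 0 → u k ≠ 0) :
    Tendsto (fun s => logPotential w u v s - (∑ k, w k) * Real.log s) atTop
      (𝓝 (∑ k, w k * Real.log (u k))) := by
  simp only [logPotential, Finset.sum_mul, ← Finset.sum_sub_distrib, ← mul_sub]
  refine tendsto_finsetSum _ fun k _ => ?_
  by_cases hw : w k = 0
  · simp [hw]
  · exact (tendsto_log_add_mul_sub_log (v k) (h k hw)).const_mul (w k)

/-- Since `log u - log v = ∫₀^∞ (u / (v + s u) - 1 / (1 + s)) ds`, an inequality between the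
resolvent sums at every `s` integrates to one between the logarithmic sums. -/
lemma sum_mul_log_sub_log_le_of_resolvent_le {w' u' v' : κ → ℝ}
    (h : ∀ k, w k ≠ 0 → 0 < u k ∧ 0 < v k) (h' : ∀ k, w' k ≠ 0 → 0 < u' k ∧ 0 < v' k)
    (hsum : ∑ k, w k = ∑ k, w' k)
    (hres : ∀ s, 0 < s → ∑ k, w k * (u k / (v k + s * u k)) ≤
      ∑ k, w' k * (u' k / (v' k + s * u' k))) :
    ∑ k, w k * (Real.log (u k) - Real.log (v k)) ≤
      ∑ k, w' k * (Real.log (u' k) - Real.log (v' k)) := by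
  let F : ℝ → ℝ := fun s => logPotential w' u' v' s - logPotential w u v s
  have hderiv (s : ℝ) (hs : 0 ≤ s) : HasDerivAt F (∑ k, w' k * (u' k / (v' k + s * u' k)) -
      ∑ k, w k * (u k / (v k + s * u k))) s :=
    (hasDerivAt_logPotential fun k hk =>
        (add_pos_of_pos_of_nonneg (h' k hk).2 (mul_nonneg hs (h' k hk).1.le)).ne').sub
      (hasDerivAt_logPotential fun k hk =>
        (add_pos_of_pos_of_nonneg (h k hk).2 (mul_nonneg hs (h k hk).1.le)).ne')
  have hmono : MonotoneOn F (Set.Ici 0) := by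
    refine monotoneOn_of_hasDerivWithinAt_nonneg (convex_Ici 0)
      (fun s hs => (hderiv s hs).continuousAt.continuousWithinAt)
      (fun s hs => (hderiv s (interior_subset hs)).hasDerivWithinAt) fun s hs => ?_
    rw [interior_Ici] at hs
    exact sub_nonneg.2 (hres s hs)
  have hlim : Tendsto F atTop
      (𝓝 (∑ k, w' k * Real.log (u' k) - ∑ k, w k * Real.log (u k))) := by
    refine ((tendsto_logPotential_sub_log (v := v') fun k hk => (h' k hk).1.ne').sub
      (tendsto_logPotential_sub_log (v := v) fun k hk => (h k hk).1.ne')).congr fun s => ?_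
    rw [hsum, sub_sub_sub_cancel_right]
  have hzero_le : F 0 ≤ ∑ k, w' k * Real.log (u' k) - ∑ k, w k * Real.log (u k) := by
    refine ge_of_tendsto hlim ?_
    filter_upwards [eventually_ge_atTop 0] with s hs
    exact hmono Set.self_mem_Ici hs hs
  simp only [F, logPotential_zero] at hzero_le
  simp only [mul_sub, Finset.sum_sub_distrib]
  linarith

lemma mul_log_div_eq_mul_log_sub_log {x y : ℝ} (h : x ≠ 0 → y ≠ 0) :
    x * Real.log (x / y) = x * (Real.log x - Real.log y) := by
  by_cases hx : x = 0
  · simp [hx]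
  · rw [Real.log_div hx (h hx)]

end LogPotential

section TracePairing

open Matrix

variable {n 𝕜 : Type*} [RCLike 𝕜] [Fintype n]

/-- The real trace pairing `(A, B) ↦ Re tr (A B)`. For a state `A` and an effect `B` it is the
probability of the outcome `B`. -/
noncomputable def tracePairing : Matrix n n 𝕜 →ₗ[ℝ] Matrix n n 𝕜 →ₗ[ℝ] ℝ :=
  (LinearMap.mul ℝ (Matrix n n 𝕜)).compr₂ (RCLike.reLm ∘ₗ traceLinearMap n ℝ 𝕜)

lemma tracePairing_apply (A B : Matrix n n 𝕜) :
    tracePairing A B = RCLike.re (A * B).trace := rfl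

open scoped MatrixOrder in
lemma tracePairing_nonneg {A B : Matrix n n 𝕜} (hA : A.PosSemidef) (hB : B.PosSemidef) :
    0 ≤ tracePairing A B := by
  classical
  obtain ⟨C, rfl⟩ := CStarAlgebra.nonneg_iff_eq_star_mul_self.mp hB.nonneg
  rw [tracePairing_apply, star_eq_conjTranspose, ← Matrix.mul_assoc, trace_mul_cycle]
  exact (RCLike.nonneg_iff.mp (hA.mul_mul_conjTranspose_same C).trace_nonneg).1

open scoped MatrixOrder in
lemma mul_eq_zero_of_tracePairing_eq_zero {A B : Matrix n n 𝕜} (hA : A.PosSemidef)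
    (hB : B.PosSemidef) (h : tracePairing A B = 0) : A * B = 0 := by
  classical
  obtain ⟨C, rfl⟩ := CStarAlgebra.nonneg_iff_eq_star_mul_self.mp hA.nonneg
  obtain ⟨D, rfl⟩ := CStarAlgebra.nonneg_iff_eq_star_mul_self.mp hB.nonneg
  simp only [star_eq_conjTranspose] at h ⊢
  have htrace : ((C * Dᴴ)ᴴ * (C * Dᴴ)).trace = 0 := by
    have hnonneg := RCLike.nonneg_iff.mp (posSemidef_conjTranspose_mul_self (C * Dᴴ)).trace_nonneg
    have hcycle : (Cᴴ * C * (Dᴴ * D)).trace = ((C * Dᴴ)ᴴ * (C * Dᴴ)).trace := by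
      rw [conjTranspose_mul, conjTranspose_conjTranspose, ← Matrix.mul_assoc, trace_mul_comm]
      simp only [Matrix.mul_assoc]
    rw [tracePairing_apply, hcycle] at h
    exact RCLike.ext (by simpa using h) (by simpa using hnonneg.2)
  have hCD : C * Dᴴ = 0 := trace_conjTranspose_mul_self_eq_zero_iff.mp htrace
  calc Cᴴ * C * (Dᴴ * D) = Cᴴ * (C * Dᴴ) * D := by simp only [Matrix.mul_assoc]
    _ = 0 := by rw [hCD, Matrix.mul_zero, Matrix.zero_mul]

lemma tracePairing_eq_zero_of_ker_le {ρ σ : Matrix n n 𝕜}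
    (hker : ∀ z, σ *ᵥ z = 0 → ρ *ᵥ z = 0) (hσ : σ.PosSemidef) {E : Matrix n n 𝕜}
    (hE : E.PosSemidef) (h : tracePairing σ E = 0) : tracePairing ρ E = 0 := by
  have hσE := mul_eq_zero_of_tracePairing_eq_zero hσ hE h
  have hρE : ρ * E = 0 := by
    ext i j
    exact congrFun (hker (E.col j) (funext fun i => congrFun (congrFun hσE i) j)) i
  rw [tracePairing_apply, hρE, trace_zero, map_zero]

lemma posSemidef_sum_sq_smul_sub_mul_self [DecidableEq n] {Y : Type*} [Fintype Y]
    {M : Y → Matrix n n 𝕜} (hM : ∀ y, (M y).PosSemidef) (hMsum : ∑ y, M y = 1) (x : Y → ℝ) :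
    (∑ y, x y ^ 2 • M y - (∑ y, x y • M y) * ∑ y, x y • M y).PosSemidef := by
  set X := ∑ y, x y • M y with hX
  have hXstar : Xᴴ = X := by
    simp only [hX, conjTranspose_sum, conjTranspose_smul, (hM _).1.eq, star_trivial]
  have hexpand (y : Y) : (x y • 1 - X) * M y * (x y • 1 - X)ᴴ =
      x y ^ 2 • M y - x y • M y * X - X * (x y • M y) + X * M y * X := by
    simp only [conjTranspose_sub, conjTranspose_smul, conjTranspose_one, hXstar, star_trivial,
      sub_mul, mul_sub, smul_mul_assoc, mul_smul_comm, one_mul, mul_one, smul_sub, smul_smul,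
      pow_two]
    abel
  have hsum : ∑ y, (x y • 1 - X) * M y * (x y • 1 - X)ᴴ = ∑ y, x y ^ 2 • M y - X * X := by
    simp only [hexpand, Finset.sum_add_distrib, Finset.sum_sub_distrib, ← Finset.sum_mul,
      ← Finset.mul_sum, ← hX, hMsum, mul_one, sub_add_cancel]
  rw [← hsum]
  exact posSemidef_sum _ fun y _ => (hM y).mul_mul_conjTranspose_same _

lemma tracePairing_mul_self_le_sum [DecidableEq n] {Y : Type*} [Fintype Y]
    {M : Y → Matrix n n 𝕜} (hM : ∀ y, (M y).PosSemidef) (hMsum : ∑ y, M y = 1) (x : Y → ℝ)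
    {τ : Matrix n n 𝕜} (hτ : τ.PosSemidef) :
    tracePairing τ ((∑ y, x y • M y) * ∑ y, x y • M y) ≤ ∑ y, x y ^ 2 * tracePairing τ (M y) := by
  simpa only [map_sub, map_sum, map_smul, smul_eq_mul, sub_nonneg] using
    tracePairing_nonneg hτ (posSemidef_sum_sq_smul_sub_mul_self hM hMsum x)

/-- The functional `X ↦ 2 tr (ρ X) - tr (τ X²)`, concave on Hermitian `X` if `τ ≥ 0`. For commuting
`ρ` and `τ > 0` its maximum is `tr (ρ² τ⁻¹)`, a variational form of the resolvent sums. -/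
noncomputable def dualQuadratic (ρ τ X : Matrix n n 𝕜) : ℝ :=
  2 * tracePairing ρ X - tracePairing τ (X * X)

lemma exists_isHermitian_sum_le_dualQuadratic [DecidableEq n] {Y : Type*} [Fintype Y]
    {M : Y → Matrix n n 𝕜} (hM : ∀ y, (M y).PosSemidef) (hMsum : ∑ y, M y = 1)
    (ρ : Matrix n n 𝕜) {τ : Matrix n n 𝕜} (hτ : τ.PosSemidef) :
    ∃ X : Matrix n n 𝕜, X.IsHermitian ∧
      ∑ y, tracePairing ρ (M y) * (tracePairing ρ (M y) / tracePairing τ (M y)) ≤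
        dualQuadratic ρ τ X := by
  let x : Y → ℝ := fun y => tracePairing ρ (M y) / tracePairing τ (M y)
  have hsq (y : Y) : tracePairing ρ (M y) * x y =
      2 * (x y * tracePairing ρ (M y)) - x y ^ 2 * tracePairing τ (M y) := by
    by_cases hzero : tracePairing τ (M y) = 0
    · simp [x, hzero]
    · simp only [x]
      field_simp
      ring
  refine ⟨∑ y, x y • M y, ?_, ?_⟩
  · simp only [IsHermitian, conjTranspose_sum, conjTranspose_smul, (hM _).1.eq, star_trivial]
  · calc ∑ y, tracePairing ρ (M y) * x y
        = 2 * tracePairing ρ (∑ y, x y • M y) - ∑ y, x y ^ 2 * tracePairing τ (M y) := by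
          simp only [hsq, Finset.sum_sub_distrib, ← Finset.mul_sum, map_sum, map_smul, smul_eq_mul]
      _ ≤ dualQuadratic ρ τ (∑ y, x y • M y) :=
          sub_le_sub_left (tracePairing_mul_self_le_sum hM hMsum x hτ) _

end TracePairing

section Eigenbases

open Matrix

variable {n 𝕜 : Type*} [RCLike 𝕜] [Fintype n] [DecidableEq n] {A B : Matrix n n 𝕜}
  (hA : A.IsHermitian) (hB : B.IsHermitian)

/-- The matrix of `X` from the eigenbasis `b` of `B` to the eigenbasis `a` of `A`: its
entries are `⟪aᵢ, X bⱼ⟫`. -/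
noncomputable def eigenbasisMatrix (X : Matrix n n 𝕜) : Matrix n n 𝕜 :=
  star (hA.eigenvectorUnitary : Matrix n n 𝕜) * X * hB.eigenvectorUnitary

lemma eigenbasisMatrix_sub (X Z : Matrix n n 𝕜) :
    eigenbasisMatrix hA hB (X - Z) = eigenbasisMatrix hA hB X - eigenbasisMatrix hA hB Z := by
  simp only [eigenbasisMatrix, mul_sub, sub_mul]

lemma eigenbasisMatrix_cfc_mul (f : ℝ → ℝ) (X : Matrix n n 𝕜) (i j : n) :
    eigenbasisMatrix hA hB (hA.cfc f * X) i j =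
      (f (hA.eigenvalues i) : 𝕜) * eigenbasisMatrix hA hB X i j := by
  have hcancel : eigenbasisMatrix hA hB (hA.cfc f * X) =
      diagonal (RCLike.ofReal ∘ f ∘ hA.eigenvalues) * eigenbasisMatrix hA hB X := by
    simp only [eigenbasisMatrix, IsHermitian.cfc, Unitary.conjStarAlgAut_apply, ← mul_assoc,
      Unitary.coe_star_mul_self, one_mul]
  rw [hcancel, diagonal_mul, Function.comp_apply, Function.comp_apply]

lemma eigenbasisMatrix_mul_cfc (f : ℝ → ℝ) (X : Matrix n n 𝕜) (i j : n) :
    eigenbasisMatrix hA hB (X * hB.cfc f) i j =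
      eigenbasisMatrix hA hB X i j * (f (hB.eigenvalues j) : 𝕜) := by
  have hcancel : eigenbasisMatrix hA hB (X * hB.cfc f) =
      eigenbasisMatrix hA hB X * diagonal (RCLike.ofReal ∘ f ∘ hB.eigenvalues) := by
    simp only [eigenbasisMatrix, IsHermitian.cfc, Unitary.conjStarAlgAut_apply, mul_assoc,
      Unitary.coe_star_mul_self, mul_one]
  rw [hcancel, mul_diagonal, Function.comp_apply, Function.comp_apply]

lemma isHermitian_cfc_id : hA.cfc id = A := hA.spectral_theorem.symm

lemma eigenbasisMatrix_mul_left (X : Matrix n n 𝕜) (i j : n) :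
    eigenbasisMatrix hA hB (A * X) i j =
      (hA.eigenvalues i : 𝕜) * eigenbasisMatrix hA hB X i j := by
  simpa only [isHermitian_cfc_id, id_eq] using eigenbasisMatrix_cfc_mul hA hB id X i j

lemma eigenbasisMatrix_mul_right (X : Matrix n n 𝕜) (i j : n) :
    eigenbasisMatrix hA hB (X * B) i j =
      eigenbasisMatrix hA hB X i j * (hB.eigenvalues j : 𝕜) := by
  simpa only [isHermitian_cfc_id, id_eq] using eigenbasisMatrix_mul_cfc hA hB id X i j

lemma tracePairing_conjTranspose_eq_sum (X Z : Matrix n n 𝕜) :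
    tracePairing X Zᴴ = ∑ k : n × n,
      RCLike.re (eigenbasisMatrix hA hB X k.1 k.2 * star (eigenbasisMatrix hA hB Z k.1 k.2)) := by
  have hmul : eigenbasisMatrix hA hB X * (eigenbasisMatrix hA hB Z)ᴴ =
      star (hA.eigenvectorUnitary : Matrix n n 𝕜) * (X * Zᴴ) * hA.eigenvectorUnitary := by
    rw [eigenbasisMatrix, eigenbasisMatrix, ← star_eq_conjTranspose, star_mul, star_mul, star_star]
    simp only [mul_assoc]
    rw [← mul_assoc (hB.eigenvectorUnitary : Matrix n n 𝕜),
      Unitary.mul_star_self_of_mem hB.eigenvectorUnitary.2, one_mul, star_eq_conjTranspose Z]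
  have htrace : (X * Zᴴ).trace =
      (eigenbasisMatrix hA hB X * (eigenbasisMatrix hA hB Z)ᴴ).trace := by
    rw [hmul, trace_mul_cycle, Unitary.mul_star_self_of_mem hA.eigenvectorUnitary.2, one_mul]
  rw [tracePairing_apply, htrace, Fintype.sum_prod_type]
  simp only [Matrix.trace, diag_apply, mul_apply, conjTranspose_apply, map_sum]

lemma tracePairing_eq_sum_left (X : Matrix n n 𝕜) :
    tracePairing A X = ∑ k : n × n, hA.eigenvalues k.1 *
      RCLike.re (eigenbasisMatrix hA hB X k.1 k.2 * star (eigenbasisMatrix hA hB 1 k.1 k.2)) := by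
  simpa only [tracePairing_apply, conjTranspose_one, mul_one, eigenbasisMatrix_mul_left, mul_assoc,
    RCLike.re_ofReal_mul] using tracePairing_conjTranspose_eq_sum hA hB (A * X) 1

lemma re_mul_star_self (z : 𝕜) : RCLike.re (z * star z) = ‖z‖ ^ 2 := by
  rw [RCLike.star_def, RCLike.mul_conj, ← RCLike.ofReal_pow, RCLike.ofReal_re]

lemma tracePairing_mul_conjTranspose_eq_sum_left (X : Matrix n n 𝕜) :
    tracePairing A (X * Xᴴ) =
      ∑ k : n × n, hA.eigenvalues k.1 * ‖eigenbasisMatrix hA hB X k.1 k.2‖ ^ 2 := by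
  simpa only [tracePairing_apply, eigenbasisMatrix_mul_left, mul_assoc, RCLike.re_ofReal_mul,
    re_mul_star_self] using tracePairing_conjTranspose_eq_sum hA hB (A * X) X

lemma tracePairing_conjTranspose_mul_eq_sum_right (X : Matrix n n 𝕜) :
    tracePairing B (Xᴴ * X) =
      ∑ k : n × n, hB.eigenvalues k.2 * ‖eigenbasisMatrix hA hB X k.1 k.2‖ ^ 2 := by
  have hcycle : tracePairing B (Xᴴ * X) = tracePairing (X * B) Xᴴ := by
    rw [tracePairing_apply, tracePairing_apply, ← mul_assoc, trace_mul_cycle]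
  rw [hcycle, tracePairing_conjTranspose_eq_sum hA hB]
  refine Finset.sum_congr rfl fun k _ => ?_
  rw [eigenbasisMatrix_mul_right, mul_right_comm, mul_comm, RCLike.re_ofReal_mul, re_mul_star_self]

/-- The Nussbaum-Szkola weight `aᵢ |⟪aᵢ, bⱼ⟫|²` of a pair of eigenvectors of `A` and `B`. -/
noncomputable def overlapWeight (k : n × n) : ℝ :=
  hA.eigenvalues k.1 * ‖eigenbasisMatrix hA hB 1 k.1 k.2‖ ^ 2

lemma sum_overlapWeight : ∑ k, overlapWeight hA hB k = tracePairing A 1 := by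
  simpa only [overlapWeight, conjTranspose_one, mul_one] using
    (tracePairing_mul_conjTranspose_eq_sum_left hA hB 1).symm

lemma overlapWeight_eq_zero_of_ker_le (hker : ∀ z, B *ᵥ z = 0 → A *ᵥ z = 0) {k : n × n}
    (hk : hB.eigenvalues k.2 = 0) : overlapWeight hA hB k = 0 := by
  have hAb : A *ᵥ ⇑(hB.eigenvectorBasis k.2) = 0 :=
    hker _ (by rw [hB.mulVec_eigenvectorBasis, hk, zero_smul])
  have hentry : eigenbasisMatrix hA hB (A * 1) k.1 k.2 = 0 := by
    have hcol (i : n) : (A * (hB.eigenvectorUnitary : Matrix n n 𝕜)) i k.2 = 0 := congrFun hAb i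
    simp only [eigenbasisMatrix, mul_one, mul_assoc, mul_apply (M := star _), hcol, mul_zero,
      Finset.sum_const_zero]
  rw [eigenbasisMatrix_mul_left, mul_eq_zero, RCLike.ofReal_eq_zero] at hentry
  rcases hentry with h | h <;> simp [overlapWeight, h]

lemma tracePairing_cfc_sub_cfc (f g : ℝ → ℝ) :
    tracePairing A (hA.cfc f - hB.cfc g) =
      ∑ k, overlapWeight hA hB k * (f (hA.eigenvalues k.1) - g (hB.eigenvalues k.2)) := by
  have hentry (i j : n) : eigenbasisMatrix hA hB (hA.cfc f - hB.cfc g) i j =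
      ((f (hA.eigenvalues i) - g (hB.eigenvalues j) : ℝ) : 𝕜) * eigenbasisMatrix hA hB 1 i j := by
    have hf := eigenbasisMatrix_cfc_mul hA hB f 1 i j
    have hg := eigenbasisMatrix_mul_cfc hA hB g 1 i j
    rw [mul_one] at hf
    rw [one_mul, mul_comm] at hg
    rw [eigenbasisMatrix_sub, Matrix.sub_apply, hf, hg, ← sub_mul, RCLike.ofReal_sub]
  rw [tracePairing_eq_sum_left hA hB]
  refine Finset.sum_congr rfl fun k _ => ?_
  rw [hentry, mul_assoc, RCLike.re_ofReal_mul, re_mul_star_self, overlapWeight]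
  ring

lemma two_mul_re_mul_star_sub_le (z c : 𝕜) {p t : ℝ} (ht : 0 ≤ t) (hpt : t = 0 → p = 0) :
    2 * (p * RCLike.re (z * star c)) - t * ‖z‖ ^ 2 ≤ p * ‖c‖ ^ 2 * (p / t) := by
  rcases ht.eq_or_lt' with rfl | ht
  · simp [hpt rfl]
  have hsq : ‖(t : 𝕜) * z - (p : 𝕜) * c‖ ^ 2 =
      t ^ 2 * ‖z‖ ^ 2 - 2 * (t * p * RCLike.re (z * star c)) + p ^ 2 * ‖c‖ ^ 2 := by
    rw [← re_mul_star_self, ← re_mul_star_self z, ← re_mul_star_self c]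
    simp only [star_sub, star_mul', RCLike.star_def, RCLike.conj_ofReal, RCLike.mul_re, map_sub,
      RCLike.ofReal_re, RCLike.ofReal_im, zero_mul, sub_zero, RCLike.conj_re, RCLike.conj_im,
      mul_neg, neg_zero, RCLike.mul_im, add_zero, sub_neg_eq_add]
    ring
  have hdiv : p * ‖c‖ ^ 2 * (p / t) - (2 * (p * RCLike.re (z * star c)) - t * ‖z‖ ^ 2) =
      ‖(t : 𝕜) * z - (p : 𝕜) * c‖ ^ 2 / t := by
    rw [hsq]
    field_simp
    ring
  rw [← sub_nonneg, hdiv]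
  positivity

end Eigenbases

section ResolventInequality

open Matrix

variable {n 𝕜 : Type*} [RCLike 𝕜] [Fintype n] [DecidableEq n] {ρ σ : Matrix n n 𝕜}

lemma dualQuadratic_le_sum (hρ : ρ.PosSemidef) (hσ : σ.PosSemidef) {s : ℝ} (hs : 0 < s)
    {X : Matrix n n 𝕜} (hX : X.IsHermitian) :
    dualQuadratic ρ (σ + s • ρ) X ≤ ∑ k : n × n, overlapWeight hρ.1 hσ.1 k *
      (hρ.1.eigenvalues k.1 / (hσ.1.eigenvalues k.2 + s * hρ.1.eigenvalues k.1)) := by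
  have hXX : tracePairing ρ (X * X) =
      ∑ k : n × n, hρ.1.eigenvalues k.1 * ‖eigenbasisMatrix hρ.1 hσ.1 X k.1 k.2‖ ^ 2 := by
    simpa only [hX.eq] using tracePairing_mul_conjTranspose_eq_sum_left hρ.1 hσ.1 X
  have hXX' : tracePairing σ (X * X) =
      ∑ k : n × n, hσ.1.eigenvalues k.2 * ‖eigenbasisMatrix hρ.1 hσ.1 X k.1 k.2‖ ^ 2 := by
    simpa only [hX.eq] using tracePairing_conjTranspose_mul_eq_sum_right hρ.1 hσ.1 X
  simp only [dualQuadratic, map_add, map_smul, LinearMap.add_apply, LinearMap.smul_apply,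
    smul_eq_mul, tracePairing_eq_sum_left hρ.1 hσ.1 X, hXX, hXX', Finset.mul_sum,
    ← Finset.sum_add_distrib, ← Finset.sum_sub_distrib, ← mul_assoc s, ← add_mul]
  refine Finset.sum_le_sum fun k _ => ?_
  have hp := hρ.eigenvalues_nonneg k.1
  have hq := hσ.eigenvalues_nonneg k.2
  exact two_mul_re_mul_star_sub_le _ _ (by positivity) fun h => by nlinarith [mul_nonneg hs.le hp]

lemma sum_tracePairing_resolvent_le {Y : Type*} [Fintype Y] {M : Y → Matrix n n 𝕜}
    (hM : ∀ y, (M y).PosSemidef) (hMsum : ∑ y, M y = 1) (hρ : ρ.PosSemidef) (hσ : σ.PosSemidef)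
    {s : ℝ} (hs : 0 < s) :
    ∑ y, tracePairing ρ (M y) *
        (tracePairing ρ (M y) / (tracePairing σ (M y) + s * tracePairing ρ (M y))) ≤
      ∑ k : n × n, overlapWeight hρ.1 hσ.1 k *
        (hρ.1.eigenvalues k.1 / (hσ.1.eigenvalues k.2 + s * hρ.1.eigenvalues k.1)) := by
  obtain ⟨X, hX, hle⟩ := exists_isHermitian_sum_le_dualQuadratic hM hMsum ρ
    (hσ.add (hρ.smul hs.le))
  simp only [map_add, map_smul, LinearMap.add_apply, LinearMap.smul_apply, smul_eq_mul] at hle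
  exact hle.trans (dualQuadratic_le_sum hρ hσ hs hX)

end ResolventInequality

section MeasuredRelativeEntropy

open Matrix

variable {ρ σ : Matrix (Fin d) (Fin d) ℂ}

lemma qRelEntropy_eq_sum (hρ : ρ.IsHermitian) (hσ : σ.IsHermitian) :
    qRelEntropy hρ hσ = ∑ k, overlapWeight hρ hσ k *
      (Real.log (hρ.eigenvalues k.1) - Real.log (hσ.eigenvalues k.2)) :=
  tracePairing_cfc_sub_cfc hρ hσ Real.log Real.log

theorem measured_relEntropy_le_qRelEntropy {Y : Type*} [Fintype Y]
    {M : Y → Matrix (Fin d) (Fin d) ℂ} (hM : ∀ y, (M y).PosSemidef) (hMsum : ∑ y, M y = 1)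
    (hρ : ρ.PosSemidef) (hσ : σ.PosSemidef) (hker : ∀ z, σ *ᵥ z = 0 → ρ *ᵥ z = 0) :
    ∑ y, tracePairing ρ (M y) * Real.log (tracePairing ρ (M y) / tracePairing σ (M y)) ≤
      qRelEntropy hρ.1 hσ.1 := by
  have hzero (y : Y) : tracePairing ρ (M y) ≠ 0 → tracePairing σ (M y) ≠ 0 :=
    mt (tracePairing_eq_zero_of_ker_le hker hσ (hM y))
  have htotal : ∑ y, tracePairing ρ (M y) = ∑ k, overlapWeight hρ.1 hσ.1 k := by
    rw [sum_overlapWeight, ← map_sum, hMsum]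
  simp only [qRelEntropy_eq_sum, mul_log_div_eq_mul_log_sub_log (hzero _)]
  refine sum_mul_log_sub_log_le_of_resolvent_le (fun y hy => ?_) (fun k hk => ?_) htotal
    fun s hs => sum_tracePairing_resolvent_le hM hMsum hρ hσ hs
  · exact ⟨(tracePairing_nonneg hρ (hM y)).lt_of_ne' hy,
      (tracePairing_nonneg hσ (hM y)).lt_of_ne' (hzero y hy)⟩
  · exact ⟨(hρ.eigenvalues_nonneg k.1).lt_of_ne' (left_ne_zero_of_mul hk),
      (hσ.eigenvalues_nonneg k.2).lt_of_ne' (mt (overlapWeight_eq_zero_of_ker_le _ _ hker) hk)⟩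

end MeasuredRelativeEntropy

section Ensemble

open Matrix

lemma mulVec_eq_zero_of_sum_mulVec_eq_zero {n 𝕜 Θ : Type*} [RCLike 𝕜] [Fintype n] [Fintype Θ]
    {ω : Θ → Matrix n n 𝕜} (hω : ∀ θ, (ω θ).PosSemidef) {z : n → 𝕜} (hz : (∑ θ, ω θ) *ᵥ z = 0)
    (θ : Θ) : ω θ *ᵥ z = 0 := by
  have hsum : ∑ θ, star z ⬝ᵥ ω θ *ᵥ z = 0 := by
    rw [← dotProduct_sum, ← sum_mulVec, hz, dotProduct_zero]
  rw [Finset.sum_eq_zero_iff_of_nonneg fun θ _ => (hω θ).dotProduct_mulVec_nonneg z] at hsum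
  exact ((hω θ).dotProduct_mulVec_zero_iff z).mp (hsum θ (Finset.mem_univ θ))

end Ensemble

theorem holevo_bound_general {Θ Y : Type*} [Fintype Θ] [Fintype Y]
    (π : Θ → ℝ) (hπ0 : ∀ θ, 0 ≤ π θ)
    (ρ : Θ → Matrix (Fin d) (Fin d) ℂ) (hρ : ∀ θ, (ρ θ).PosSemidef)
    (hρbar : (∑ θ, (π θ : ℂ) • ρ θ).IsHermitian)
    (M : Y → Matrix (Fin d) (Fin d) ℂ)
    (hMpos : ∀ y, (M y).PosSemidef) (hMsum : ∑ y, M y = 1) :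
    ∑ θ, π θ * ∑ y, (Matrix.trace (ρ θ * M y)).re *
        Real.log ((Matrix.trace (ρ θ * M y)).re /
          (∑ θ', π θ' * (Matrix.trace (ρ θ' * M y)).re))
      ≤ ∑ θ, π θ * qRelEntropy (hρ θ).1 hρbar := by
  have hω (θ : Θ) : ((π θ : ℂ) • ρ θ).PosSemidef :=
    (hρ θ).smul (Complex.zero_le_real.mpr (hπ0 θ))
  have hρbar_outcome (y : Y) : tracePairing (∑ θ, (π θ : ℂ) • ρ θ) (M y) =
      ∑ θ, π θ * tracePairing (ρ θ) (M y) := by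
    simp only [Complex.coe_smul, map_sum, map_smul, LinearMap.sum_apply, LinearMap.smul_apply,
      smul_eq_mul]
  refine Finset.sum_le_sum fun θ _ => ?_
  rcases (hπ0 θ).eq_or_lt' with hzero | hpos
  · simp only [hzero, zero_mul, le_refl]
  have hker (z : Fin d → ℂ) (hz : (∑ θ, (π θ : ℂ) • ρ θ).mulVec z = 0) : (ρ θ).mulVec z = 0 := by
    simpa [Matrix.smul_mulVec, hpos.ne'] using mulVec_eq_zero_of_sum_mulVec_eq_zero hω hz θ
  have hmono := measured_relEntropy_le_qRelEntropy hMpos hMsum (hρ θ)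
    (Matrix.posSemidef_sum _ fun θ _ => hω θ) hker
  simp only [hρbar_outcome] at hmono
  exact mul_le_mul_of_nonneg_left hmono hpos.le

/-- Holevo bound (finite dimensions, finite ensemble): the classical mutual
information of the measurement outcomes is bounded by the Holevo information
`χ = ∑_θ π(θ) D(ρ_θ‖ρ̄)`, where `ρ̄ = ∑_θ π(θ) ρ_θ`. -/
theorem holevo_bound {Θ Y : Type*} [Fintype Θ] [Fintype Y]
    (π : Θ → ℝ) (hπ0 : ∀ θ, 0 ≤ π θ) (hπ1 : ∑ θ, π θ = 1)
    (ρ : Θ → Matrix (Fin d) (Fin d) ℂ)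
    (hρ : ∀ θ, (ρ θ).PosSemidef) (hρtr : ∀ θ, Matrix.trace (ρ θ) = 1)
    (hρbar : (∑ θ, (π θ : ℂ) • ρ θ).IsHermitian)
    (M : Y → Matrix (Fin d) (Fin d) ℂ)
    (hMpos : ∀ y, (M y).PosSemidef) (hMsum : ∑ y, M y = 1) :
    ∑ θ, π θ * ∑ y, (Matrix.trace (ρ θ * M y)).re *
        Real.log ((Matrix.trace (ρ θ * M y)).re /
          (∑ θ', π θ' * (Matrix.trace (ρ θ' * M y)).re))
      ≤ ∑ θ, π θ * qRelEntropy (hρ θ).1 hρbar := by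
  exact holevo_bound_general π hπ0 ρ hρ hρbar M hMpos hMsum
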